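/- Let α be a type and let A and B be palindromic lists over α. Then for every n ≥ 2 and every i with 1 ≤ i ≤ 2^{n−1}, setting k = 6·2^{n−2} + i and m = 6·2^{n−2} − i + 1, one has S_{A,B}(k) = reverse( S_{B,A}(m) ), where S_{B,A} denotes the family defined by the same recursion with the roles of A and B interchanged. -/

import Mathlib

/-- Stern's diatomic sequence. -/
def stern : ℕ → ℕ
  | 0 => 0
  | 1 => 1
  | n + 2 =>
    if (n + 2) % 2 = 0 then stern ((n + 2) / 2)
    else stern ((n + 2) / 2) + stern ((n + 2) / 2 + 1)
decreasing_by all_goals omega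

/-- OEIS A003602: a(1)=1, a(2n)=a(n), a(2n+1)=n+1. (a(0)=0 as junk value.) -/
def aseq : ℕ → ℕ
  | 0 => 0
  | 1 => 1
  | n + 2 =>
    if (n + 2) % 2 = 0 then aseq ((n + 2) / 2)
    else (n + 2) / 2 + 1
decreasing_by all_goals omega

-- the modified sequence `a*`: zero at powers of two.
open Classical in
noncomputable def aStar (j : ℕ) : ℕ :=
  if ∃ k, j = 2 ^ k then 0 else aseq j

theorem aseq_le (n : ℕ) : aseq n ≤ n := by
  induction n using Nat.strong_induction_on with
  | _ n ih =>
    match n with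
    | 0 => simp [aseq]
    | 1 => simp [aseq]
    | m + 2 =>
      rw [aseq]
      split
      · exact le_trans (ih ((m + 2) / 2) (by omega)) (by omega)
      · omega

theorem aStar_le (j : ℕ) : aStar j ≤ j := by
  unfold aStar
  split
  · omega
  · exact aseq_le j

/-- The Markov-type sequence `S_{A,B}(n)`. -/
noncomputable def mseq {α : Type*} (A B : List α) : ℕ → List α
  | 0 => A
  | 1 => B
  | 2 => A ++ B
  | n + 3 =>
    if (n + 3) % 2 = 0 then
      mseq A B ((n + 3) / 2) ++ mseq A B (aseq ((n + 3) / 2))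
    else
      mseq A B (aStar ((n + 4) / 2 - 1)) ++ mseq A B ((n + 4) / 2)
decreasing_by
  all_goals first
    | omega
    | exact lt_of_le_of_lt (aseq_le _) (by omega)
    | exact lt_of_le_of_lt (aStar_le _) (by omega)

theorem aseq_even (n : ℕ) : aseq (2 * n) = aseq n := by
  rcases n with _ | n
  · rfl
  · rw [show 2 * (n + 1) = 2 * n + 2 by ring, aseq, if_pos (by omega)]
    congr 1; omega

theorem aseq_odd (n : ℕ) : aseq (2 * n + 1) = n + 1 := by
  rcases n with _ | n
  · simp [aseq]
  · rw [show 2 * (n + 1) + 1 = (2 * n + 1) + 2 by ring, aseq, if_neg (by omega)]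
    omega

theorem aseq_pow (n : ℕ) : aseq (2 ^ n) = 1 := by
  induction n with
  | zero => simp [aseq]
  | succ n ih => rw [pow_succ', aseq_even, ih]

theorem mseq_even {α : Type*} (A B : List α) (j : ℕ) (hj : 2 ≤ j) :
    mseq A B (2 * j) = mseq A B j ++ mseq A B (aseq j) := by
  obtain ⟨t, rfl⟩ : ∃ t, j = t + 2 := ⟨j - 2, by omega⟩
  rw [show 2 * (t + 2) = (2 * t + 1) + 3 by ring, mseq, if_pos (by omega)]
  rw [show (2 * t + 1 + 3) / 2 = t + 2 by omega]

theorem mseq_odd {α : Type*} (A B : List α) (j : ℕ) (hj : 1 ≤ j) :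
    mseq A B (2 * j + 1) = mseq A B (aStar j) ++ mseq A B (j + 1) := by
  obtain ⟨t, rfl⟩ : ∃ t, j = t + 1 := ⟨j - 1, by omega⟩
  rw [show 2 * (t + 1) + 1 = (2 * t) + 3 by ring, mseq, if_neg (by omega)]
  rw [show (2 * t + 4) / 2 = t + 2 by omega]
  rfl

theorem aseq_refl (n : ℕ) : ∀ p q, p + q = 3 * 2 ^ n → 2 ^ n < p → p < 2 ^ (n + 1) →
    ∃ m < n, aseq p + aseq q = 3 * 2 ^ m + 1 ∧ 2 ^ m < aseq p ∧ aseq p ≤ 2 ^ (m + 1) := by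
  induction n with
  | zero => intro p q h h1 h2; simp at h1 h2; omega
  | succ n ih =>
    intro p q h h1 h2
    simp only [pow_succ] at h h1 h2
    rcases Nat.even_or_odd' p with ⟨s, rfl | rfl⟩
    · obtain ⟨t, rfl⟩ : ∃ t, q = 2 * t := ⟨q / 2, by omega⟩
      obtain ⟨m, hm, h'⟩ := ih s t (by omega) (by omega) (by rw [pow_succ]; omega)
      refine ⟨m, by omega, ?_⟩
      simpa only [aseq_even] using h'
    · obtain ⟨t, rfl⟩ : ∃ t, q = 2 * t + 1 := ⟨q / 2, by omega⟩
      refine ⟨n, by omega, ?_⟩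
      simp only [aseq_odd, pow_succ]
      omega

theorem not_pow_between (n q : ℕ) (h1 : 2 ^ n < q) (h2 : q < 2 ^ (n + 1)) :
    ¬ ∃ k, q = 2 ^ k := by
  rintro ⟨k, rfl⟩
  have h1 := (Nat.pow_lt_pow_iff_right (by norm_num : 1 < 2)).1 h1
  have h2 := (Nat.pow_lt_pow_iff_right (by norm_num : 1 < 2)).1 h2
  omega

theorem mseq_main {α : Type*} (n : ℕ) : ∀ (A B : List α), A.reverse = A → B.reverse = B →
    ∀ p q, p + q = 3 * 2 ^ n + 1 → 2 ^ n < p → p ≤ 2 ^ (n + 1) →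
    mseq A B p = (mseq B A q).reverse := by
  induction n using Nat.strong_induction_on with
  | _ n ih =>
    rcases n with _ | n
    · intro A B hA hB p q h h1 h2
      simp at h h1 h2
      obtain rfl : p = 2 := by omega
      obtain rfl : q = 2 := by omega
      simp [mseq, hA, hB]
    · have Q : ∀ (A B : List α), A.reverse = A → B.reverse = B →
          ∀ p q, p + q = 3 * 2 ^ n → 2 ^ n < p → p ≤ 2 ^ (n + 1) →
          mseq A B (aseq p) = (mseq B A (aStar q)).reverse := by
        intro A B hA hB p q h h1 h2
        rcases h2.lt_or_eq with h2 | h2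
        · obtain ⟨m, hm, e1, e2, e3⟩ := aseq_refl n p q h h1 h2
          have hq : aStar q = aseq q := by
            rw [aStar, if_neg]
            rw [pow_succ] at h2
            exact not_pow_between n q (by omega) (by rw [pow_succ]; omega)
          rw [hq]
          exact ih m (by omega) A B hA hB _ _ e1 e2 e3
        · subst h2
          rw [pow_succ] at h
          have hq : q = 2 ^ n := by omega
          have : aStar q = 0 := by rw [aStar, if_pos ⟨n, hq⟩]
          rw [this, aseq_pow]
          simp [mseq, hB]
      intro A B hA hB p q h h1 h2
      have hpos : 1 ≤ 2 ^ n := Nat.one_le_two_pow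
      simp only [pow_succ] at h h1 h2
      rcases Nat.even_or_odd' p with ⟨s, rfl | rfl⟩
      · obtain ⟨t, rfl⟩ : ∃ t, q = 2 * t + 1 := ⟨q / 2, by omega⟩
        rw [mseq_even _ _ _ (by omega), mseq_odd _ _ _ (by omega), List.reverse_append,
          ih n (by omega) A B hA hB s (t + 1) (by omega) (by omega) (by rw [pow_succ]; omega),
          Q A B hA hB s t (by omega) (by omega) (by rw [pow_succ]; omega)]
      · obtain ⟨t, rfl⟩ : ∃ t, q = 2 * t := ⟨q / 2, by omega⟩
        rw [mseq_even _ _ _ (by omega), mseq_odd _ _ _ (by omega), List.reverse_append,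
          ih n (by omega) A B hA hB (s + 1) t (by omega) (by omega) (by rw [pow_succ]; omega),
          Q B A hB hA t s (by omega) (by omega) (by rw [pow_succ]; omega), List.reverse_reverse]

/-- for palindromic `A`, `B`, every `n ≥ 2` and `1 ≤ i ≤ 2^{n−1}`, with
`k = 6·2^{n−2} + i` and `m = 6·2^{n−2} − i + 1`, one has
`S_{A,B}(k) = reverse (S_{B,A}(m))`. -/
theorem stmt17 {α : Type*} (A B : List α) (hA : A.reverse = A) (hB : B.reverse = B)
    (n i : ℕ) (hn : 2 ≤ n) (hi1 : 1 ≤ i) (hi2 : i ≤ 2 ^ (n - 1)) :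
    mseq A B (6 * 2 ^ (n - 2) + i) = (mseq B A (6 * 2 ^ (n - 2) - i + 1)).reverse := by
  obtain ⟨n, rfl⟩ : ∃ t, n = t + 2 := ⟨n - 2, by omega⟩
  simp only [show n + 2 - 1 = n + 1 by omega, pow_succ] at hi2
  rw [show n + 2 - 2 = n by omega]
  apply mseq_main (n + 2) A B hA hB <;> simp only [pow_succ] <;> omega
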